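/- If γ_t is an integer linear combination of γ_1,…,γ_n with small coefficients, i.e. there exist integers α_1,…,α_n with |α_i| ≤ N for all i such that α_1γ_1 + ⋯ + α_nγ_n = γ_t, then there exists a nonzero vector v ∈ L(K;(γ_1,…,γ_n,γ_t)) with ‖v‖² < (n² + n)N² + 2nN + 2. -/

import Mathlib

/-- Membership in the lattice `L(K; (δ_1, …, δ_m)) ⊆ ℤ^{m+1}`: the vectors
`(a_1, …, a_m, K(a_1 δ_1' + ⋯ + a_m δ_m'))` with `a_i ∈ ℤ`, where `δ_i' = ⌊K δ_i⌋ / K`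
(so the last coordinate is `∑ i, a_i ⌊K δ_i⌋`). -/
def inLattice (K : ℕ) {m : ℕ} (δ : Fin m → ℝ) (v : Fin (m + 1) → ℤ) : Prop :=
  ∃ a : Fin m → ℤ, (∀ i : Fin m, v i.castSucc = a i) ∧
    v (Fin.last m) = ∑ i, a i * ⌊(K : ℝ) * δ i⌋

/-- If `γ_t = α_1 γ_1 + ⋯ + α_n γ_n` with integers `|α_i| ≤ N`, then the lattice
`L(K; (γ_1, …, γ_n, γ_t)) ⊆ ℤ^{n+2}` contains a nonzero vector `v` with
`‖v‖² < (n² + n)N² + 2nN + 2`. -/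
theorem dependent_extra_zero_short_vector
    (K N n : ℕ) (hK : 0 < K) (hN : 0 < N) (γ : Fin n → ℝ) (γt : ℝ)
    (α : Fin n → ℤ)
    (hbd : ∀ i, |α i| ≤ (N : ℤ))
    (hrel : ∑ i, (α i : ℝ) * γ i = γt) :
    ∃ v : Fin (n + 2) → ℤ, v ≠ 0 ∧ inLattice K (Fin.snoc γ γt) v ∧
      (∑ i, ((v i : ℝ)) ^ 2) <
        ((n : ℝ) ^ 2 + (n : ℝ)) * (N : ℝ) ^ 2 + 2 * (n : ℝ) * (N : ℝ) + 2 := by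
  set b : Fin (n + 1) → ℤ := Fin.snoc α (-1) with hb
  set w : ℤ := ∑ i, α i * ⌊(K : ℝ) * γ i⌋ - ⌊(K : ℝ) * γt⌋ with hw
  have hwr : (w : ℝ) = Int.fract ((K : ℝ) * γt) -
      ∑ i, (α i : ℝ) * Int.fract ((K : ℝ) * γ i) := by
    have h1 : ∑ i, (α i : ℝ) * Int.fract ((K : ℝ) * γ i)
        = (K : ℝ) * γt - ∑ i, (α i : ℝ) * (⌊(K : ℝ) * γ i⌋ : ℝ) := by
      rw [← hrel, Finset.mul_sum, ← Finset.sum_sub_distrib]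
      refine Finset.sum_congr rfl fun i _ => ?_
      unfold Int.fract
      ring
    rw [h1, hw]
    unfold Int.fract
    push_cast
    ring
  have hα : ∀ i, |(α i : ℝ)| ≤ (N : ℝ) := fun i => by exact_mod_cast hbd i
  have hS : |∑ i, (α i : ℝ) * Int.fract ((K : ℝ) * γ i)| ≤ (n : ℝ) * N := by
    refine (Finset.abs_sum_le_sum_abs _ _).trans ?_
    have h2 : ∀ i ∈ (Finset.univ : Finset (Fin n)),
        |(α i : ℝ) * Int.fract ((K : ℝ) * γ i)| ≤ (N : ℝ) := by
      intro i _
      rw [abs_mul, abs_of_nonneg (Int.fract_nonneg ((K : ℝ) * γ i))]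
      have := mul_le_mul (hα i) (Int.fract_lt_one ((K : ℝ) * γ i)).le
        (Int.fract_nonneg _) (Nat.cast_nonneg N)
      simpa using this
    simpa using Finset.sum_le_sum h2
  have hsq : (w : ℝ) ^ 2 < ((n : ℝ) * N + 1) ^ 2 := by
    have h3 := abs_le.mp hS
    have h4 := Int.fract_nonneg ((K : ℝ) * γt)
    have h5 := Int.fract_lt_one ((K : ℝ) * γt)
    apply sq_lt_sq'
    · rw [hwr]; linarith [h3.2]
    · rw [hwr]; linarith [h3.1]
  have hA : ∑ i, (α i : ℝ) ^ 2 ≤ (n : ℝ) * (N : ℝ) ^ 2 := by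
    have h6 : ∀ i ∈ (Finset.univ : Finset (Fin n)), (α i : ℝ) ^ 2 ≤ (N : ℝ) ^ 2 :=
      fun i _ => sq_le_sq' (abs_le.mp (hα i)).1 (abs_le.mp (hα i)).2
    simpa using Finset.sum_le_sum h6
  refine ⟨Fin.snoc b w, ?_, ⟨b, ?_, ?_⟩, ?_⟩
  · intro h
    have h7 := congrFun h (Fin.last n).castSucc
    simp [hb] at h7
  · intro i
    simp
  · rw [Fin.sum_univ_castSucc]
    simp [hb, hw, sub_eq_add_neg]
  · rw [Fin.sum_univ_castSucc, Fin.sum_univ_castSucc]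
    simp only [Fin.snoc_castSucc, Fin.snoc_last, hb]
    push_cast
    nlinarith
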